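/- arXiv:1910.03660 — 4 statements merged into one kernel-verified Lean document; each statement's English description precedes it below -/
import Mathlib

section
/- (Theorem 1, closed form of the RBRIDGE estimator.) For every β ∈ ℝᵖ with Rβ = r, the penalized objective satisfies ‖Y − X β̂ᴿ‖² + (β̂ᴿ)ᵀ Σ β̂ᴿ ≤ ‖Y − Xβ‖² + βᵀ Σ β; that is, β̂ᴿ minimizes the locally quadratically approximated bridge objective over the affine set {β : Rβ = r}. -/
open Matrix

/-- Theorem 1 (closed form of the RBRIDGE estimator): the restricted bridge estimator
minimizes the locally quadratically approximated bridge objective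
`β ↦ ‖Y − Xβ‖² + βᵀ Σ β` over the affine set `{β : Rβ = r}`. -/
theorem rbridge_is_minimizer {n p m : ℕ} (hn : 0 < n) (hp : 0 < p) (hm : 0 < m)
    (hmp : m ≤ p)
    (X : Matrix (Fin n) (Fin p) ℝ) (Y : Fin n → ℝ)
    (Sig : Matrix (Fin p) (Fin p) ℝ) (hSig : Sig.PosSemidef)
    (hS : (Xᵀ * X + Sig).PosDef)
    (R : Matrix (Fin m) (Fin p) ℝ) (hR : R.rank = m) (r : Fin m → ℝ) :
    let S := Xᵀ * X + Sig
    let βhat := S⁻¹.mulVec (Xᵀ.mulVec Y)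
    let βhatR := βhat - (S⁻¹ * Rᵀ * (R * S⁻¹ * Rᵀ)⁻¹).mulVec (R.mulVec βhat - r)
    ∀ β : Fin p → ℝ, R.mulVec β = r →
      (Y - X.mulVec βhatR) ⬝ᵥ (Y - X.mulVec βhatR) + βhatR ⬝ᵥ Sig.mulVec βhatR ≤
        (Y - X.mulVec β) ⬝ᵥ (Y - X.mulVec β) + β ⬝ᵥ Sig.mulVec β := by
  intro S βhat βhatR β hβ
  have hSdet : IsUnit S.det := (Matrix.isUnit_iff_isUnit_det _).1 hS.isUnit
  have hli : LinearIndependent ℝ R.row := by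
    rw [linearIndependent_iff_card_eq_finrank_span, Set.finrank,
      ← Matrix.rank_eq_finrank_span_row, hR, Fintype.card_fin]
  have hinj : Function.Injective R.vecMul := Matrix.vecMul_injective_iff.2 hli
  have hRSR : (R * S⁻¹ * Rᵀ).PosDef := by
    have h := hS.inv.mul_mul_conjTranspose_same hinj
    rwa [Matrix.conjTranspose_eq_transpose_of_trivial] at h
  have hdet : IsUnit (R * S⁻¹ * Rᵀ).det := (Matrix.isUnit_iff_isUnit_det _).1 hRSR.isUnit
  have hRb : R *ᵥ βhatR = r := by
    simp only [βhatR, Matrix.mulVec_sub R, Matrix.mulVec_mulVec _ R]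
    rw [← Matrix.mul_assoc, ← Matrix.mul_assoc, Matrix.mul_nonsing_inv _ hdet, Matrix.one_mulVec]
    simp
  obtain ⟨w, hw⟩ : ∃ w : Fin m → ℝ, S *ᵥ βhatR = Xᵀ *ᵥ Y - Rᵀ *ᵥ w := by
    refine ⟨(R * S⁻¹ * Rᵀ)⁻¹ *ᵥ (R *ᵥ βhat - r), ?_⟩
    simp only [βhatR]
    have h1 : S *ᵥ βhat = Xᵀ *ᵥ Y := by
      simp only [βhat]
      rw [Matrix.mulVec_mulVec _ S, Matrix.mul_nonsing_inv _ hSdet, Matrix.one_mulVec]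
    rw [Matrix.mulVec_sub S, h1, Matrix.mulVec_mulVec _ S, Matrix.mul_assoc S⁻¹,
      ← Matrix.mul_assoc S, Matrix.mul_nonsing_inv _ hSdet, Matrix.one_mul,
      Matrix.mulVec_mulVec _ Rᵀ]
  clear_value βhatR
  obtain ⟨d, rfl⟩ : ∃ d, β = βhatR + d := ⟨β - βhatR, by simp⟩
  have hRd : R *ᵥ d = 0 := by
    rw [Matrix.mulVec_add, hRb] at hβ
    simpa using hβ
  have hX : ∀ v : Fin n → ℝ, d ⬝ᵥ Xᵀ *ᵥ v = X *ᵥ d ⬝ᵥ v := fun v => by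
    rw [Matrix.dotProduct_mulVec, Matrix.vecMul_transpose]
  have hcross : d ⬝ᵥ S *ᵥ βhatR = X *ᵥ d ⬝ᵥ Y := by
    rw [hw, dotProduct_sub, hX, Matrix.dotProduct_mulVec d Rᵀ, Matrix.vecMul_transpose, hRd,
      zero_dotProduct, sub_zero]
  have hcross2 : d ⬝ᵥ S *ᵥ βhatR = X *ᵥ d ⬝ᵥ X *ᵥ βhatR + d ⬝ᵥ Sig *ᵥ βhatR := by
    simp only [S]
    rw [Matrix.add_mulVec, dotProduct_add, ← Matrix.mulVec_mulVec, hX]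
  have hsym : βhatR ⬝ᵥ Sig *ᵥ d = d ⬝ᵥ Sig *ᵥ βhatR := by
    have ht : Sigᵀ = Sig := by
      have := hSig.isHermitian.eq
      rwa [Matrix.conjTranspose_eq_transpose_of_trivial] at this
    rw [Matrix.dotProduct_mulVec, ← Matrix.mulVec_transpose, ht, dotProduct_comm]
  have hn1 : 0 ≤ d ⬝ᵥ Sig *ᵥ d := by
    simpa using hSig.dotProduct_mulVec_nonneg d
  have hn2 : 0 ≤ X *ᵥ d ⬝ᵥ X *ᵥ d := by
    simpa using dotProduct_star_self_nonneg (X *ᵥ d)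
  simp only [Matrix.mulVec_add, dotProduct_add, add_dotProduct, dotProduct_sub, sub_dotProduct]
  rw [dotProduct_comm Y (X *ᵥ d), dotProduct_comm (X *ᵥ βhatR) (X *ᵥ d), hsym]
  linarith
end

section
/- (Linear representation of the RBRIDGE estimator.) The restricted bridge estimator can be written as β̂ᴿ = M Xᵀ Y + S⁻¹Rᵀ(R S⁻¹ Rᵀ)⁻¹ r. Consequently, for any β ∈ ℝᵖ with Rβ = r one has β̂ᴿ − β = M Xᵀ (Y − Xβ) − M Σ β. -/
open Matrix

/-- Linear representation of the RBRIDGE estimator: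
`β̂ᴿ = M Xᵀ Y + S⁻¹Rᵀ(R S⁻¹ Rᵀ)⁻¹ r`, and consequently, for any `β` with `Rβ = r`,
`β̂ᴿ − β = M Xᵀ (Y − Xβ) − M Σ β`. -/
theorem rbridge_linear_representation {n p m : ℕ} (hn : 0 < n) (hp : 0 < p) (hm : 0 < m)
    (hmp : m ≤ p)
    (X : Matrix (Fin n) (Fin p) ℝ) (Y : Fin n → ℝ)
    (Sig : Matrix (Fin p) (Fin p) ℝ) (hSig : Sig.PosSemidef)
    (hS : (Xᵀ * X + Sig).PosDef)
    (R : Matrix (Fin m) (Fin p) ℝ) (hR : R.rank = m) (r : Fin m → ℝ) :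
    let S := Xᵀ * X + Sig
    let βhat := S⁻¹.mulVec (Xᵀ.mulVec Y)
    let βhatR := βhat - (S⁻¹ * Rᵀ * (R * S⁻¹ * Rᵀ)⁻¹).mulVec (R.mulVec βhat - r)
    let M := S⁻¹ - S⁻¹ * Rᵀ * (R * S⁻¹ * Rᵀ)⁻¹ * R * S⁻¹
    βhatR = M.mulVec (Xᵀ.mulVec Y) + (S⁻¹ * Rᵀ * (R * S⁻¹ * Rᵀ)⁻¹).mulVec r ∧
      ∀ β : Fin p → ℝ, R.mulVec β = r →
        βhatR - β = M.mulVec (Xᵀ.mulVec (Y - X.mulVec β)) - M.mulVec (Sig.mulVec β) := by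
  intro S βhat βhatR M
  have h1 : βhatR = M.mulVec (Xᵀ.mulVec Y) + (S⁻¹ * Rᵀ * (R * S⁻¹ * Rᵀ)⁻¹).mulVec r := by
    simp only [βhatR, M, βhat]
    generalize S⁻¹ * Rᵀ * (R * S⁻¹ * Rᵀ)⁻¹ = K
    rw [Matrix.sub_mulVec, Matrix.mulVec_sub, ← Matrix.mulVec_mulVec, ← Matrix.mulVec_mulVec]
    abel
  refine ⟨h1, ?_⟩
  intro β hβ
  have hdet : IsUnit S.det := (Matrix.isUnit_iff_isUnit_det _).1 hS.isUnit
  have h2 : M.mulVec (S.mulVec β) = β - (S⁻¹ * Rᵀ * (R * S⁻¹ * Rᵀ)⁻¹).mulVec r := by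
    simp only [M]
    generalize S⁻¹ * Rᵀ * (R * S⁻¹ * Rᵀ)⁻¹ = K
    rw [Matrix.mulVec_mulVec, Matrix.sub_mul, Matrix.mul_assoc, Matrix.nonsing_inv_mul _ hdet,
      Matrix.mul_one, Matrix.sub_mulVec, Matrix.one_mulVec, ← Matrix.mulVec_mulVec, hβ]
  have h3 : S.mulVec β = Xᵀ.mulVec (X.mulVec β) + Sig.mulVec β := by
    simp only [S, Matrix.add_mulVec, Matrix.mulVec_mulVec]
  rw [h3, Matrix.mulVec_add] at h2
  rw [h1, Matrix.mulVec_sub, Matrix.mulVec_sub, sub_sub, h2]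
  abel
end

section
/- (Bias of the RBRIDGE estimator, from Theorem 2.) Under the linear model Y = Xβ + ε with E[ε_i] = 0 for all i and under the restriction Rβ = r, each component of β̂ᴿ is integrable and E[β̂ᴿ] = β − M Σ β; that is, the bias of the RBRIDGE estimator equals −M Σ β. -/
open Matrix MeasureTheory

/-- Bias of the RBRIDGE estimator (from Theorem 2): under the linear model `Y = Xβ + ε`
with `E[εᵢ] = 0` and under the restriction `Rβ = r`, each component of `β̂ᴿ` is
integrable and `E[β̂ᴿ] = β − M Σ β`; i.e. the bias of the RBRIDGE estimator is `−MΣβ`. -/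
theorem rbridge_bias {n p m : ℕ} (hn : 0 < n) (hp : 0 < p) (hm : 0 < m) (hmp : m ≤ p)
    (X : Matrix (Fin n) (Fin p) ℝ)
    (Sig : Matrix (Fin p) (Fin p) ℝ) (hSig : Sig.PosSemidef)
    (hS : (Xᵀ * X + Sig).PosDef)
    (R : Matrix (Fin m) (Fin p) ℝ) (hR : R.rank = m) (r : Fin m → ℝ)
    {Ω : Type*} [MeasurableSpace Ω] (μ : Measure Ω) [IsProbabilityMeasure μ]
    (β : Fin p → ℝ) (hβ : R.mulVec β = r) (ε : Ω → Fin n → ℝ)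
    (hint : ∀ i, Integrable (fun ω => ε ω i) μ)
    (hmean : ∀ i, ∫ ω, ε ω i ∂μ = 0) :
    let S := Xᵀ * X + Sig
    let Y : Ω → Fin n → ℝ := fun ω => X.mulVec β + ε ω
    let βhat : Ω → Fin p → ℝ := fun ω => S⁻¹.mulVec (Xᵀ.mulVec (Y ω))
    let βhatR : Ω → Fin p → ℝ := fun ω =>
      βhat ω - (S⁻¹ * Rᵀ * (R * S⁻¹ * Rᵀ)⁻¹).mulVec (R.mulVec (βhat ω) - r)
    let M := S⁻¹ - S⁻¹ * Rᵀ * (R * S⁻¹ * Rᵀ)⁻¹ * R * S⁻¹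
    (∀ j, Integrable (fun ω => βhatR ω j) μ) ∧
      ∀ j, ∫ ω, βhatR ω j ∂μ = (β - M.mulVec (Sig.mulVec β)) j := by
  intro S Y βhat βhatR M
  have hu : IsUnit S.det := (Matrix.isUnit_iff_isUnit_det S).1 hS.isUnit
  have hb : ∀ ω, βhat ω = β + (S⁻¹ *ᵥ (Xᵀ *ᵥ ε ω) - S⁻¹ *ᵥ (Sig *ᵥ β)) := by
    intro ω
    have h1 : S⁻¹ *ᵥ (S *ᵥ β) = β := by
      rw [Matrix.mulVec_mulVec, Matrix.nonsing_inv_mul _ hu, Matrix.one_mulVec]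
    have h2 : S *ᵥ β = Xᵀ *ᵥ (X *ᵥ β) + Sig *ᵥ β := by
      simp only [S, Matrix.add_mulVec, Matrix.mulVec_mulVec]
    rw [h2, Matrix.mulVec_add] at h1
    simp only [βhat, Y, Matrix.mulVec_add]
    nth_rewrite 2 [← h1]
    abel
  have key : ∀ ω, βhatR ω = (β - M *ᵥ (Sig *ᵥ β)) + (M * Xᵀ) *ᵥ ε ω := by
    intro ω
    have hM : ∀ v, M *ᵥ v = S⁻¹ *ᵥ v
        - (S⁻¹ * Rᵀ * (R * S⁻¹ * Rᵀ)⁻¹) *ᵥ (R *ᵥ (S⁻¹ *ᵥ v)) := by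
      intro v
      simp only [M, Matrix.sub_mulVec, Matrix.mulVec_mulVec, Matrix.mul_assoc]
    simp only [βhatR]
    rw [hb ω, ← Matrix.mulVec_mulVec (ε ω) M, hM, hM, Matrix.mulVec_add R, hβ,
      add_sub_cancel_left, Matrix.mulVec_sub, Matrix.mulVec_sub]
    abel
  have hi : ∀ j, ∀ i ∈ Finset.univ, Integrable (fun ω => (M * Xᵀ) j i * ε ω i) μ :=
    fun j i _ => (hint i).const_mul _
  have key' : ∀ j, (fun ω => βhatR ω j) =
      fun ω => (β - M *ᵥ (Sig *ᵥ β)) j + ∑ i, (M * Xᵀ) j i * ε ω i := by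
    intro j
    funext ω
    rw [key ω]
    rfl
  refine ⟨fun j => ?_, fun j => ?_⟩
  · rw [key' j]
    exact (integrable_const _).add (integrable_finset_sum _ (hi j))
  · rw [key' j, integral_add (integrable_const _) (integrable_finset_sum _ (hi j)),
      integral_finset_sum _ (hi j)]
    simp [integral_const_mul, hmean]
end

section
/- (Theorem 3, consistency of the RBRIDGE estimator.) Let β̂_k : Ω → ℝᵖ be a sequence of random vectors converging in probability to the constant vector β, and let (S_k) be a sequence of real symmetric positive definite p×p matrices converging entrywise to a symmetric positive definite matrix C. Let R be a real m×p matrix of rank m and suppose Rβ = r. Then the sequence of restricted estimators β̂ᴿ_k := β̂_k − S_k⁻¹Rᵀ(R S_k⁻¹ Rᵀ)⁻¹(R β̂_k − r) converges in probability to β. -/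
open Matrix Filter Topology MeasureTheory

/-- Cauchy–Schwarz bound for the Euclidean norm by the Frobenius norm. -/
lemma sqrt_mulVec_le {p : ℕ} (A : Matrix (Fin p) (Fin p) ℝ) (v : Fin p → ℝ) :
    Real.sqrt (∑ i, (A.mulVec v i) ^ 2) ≤
      Real.sqrt (∑ i, ∑ j, A i j ^ 2) * Real.sqrt (∑ j, v j ^ 2) := by
  rw [← Real.sqrt_mul (by positivity), Finset.sum_mul]
  apply Real.sqrt_le_sqrt
  apply Finset.sum_le_sum
  intro i _
  exact Finset.sum_mul_sq_le_sq_mul_sq Finset.univ (fun j => A i j) v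

/-- Theorem 3 (consistency of the RBRIDGE estimator): if the random vectors `β̂ₖ`
converge in probability to the constant vector `β` (convergence in probability of
`Zₖ` to `z` means `P(‖Zₖ − z‖ > δ) → 0` for every `δ > 0`, with the Euclidean norm),
the symmetric positive definite matrices `Sₖ` converge entrywise to a symmetric
positive definite matrix `C`, `R` has rank `m`, and `Rβ = r`, then the restricted
estimators `β̂ᴿₖ := β̂ₖ − Sₖ⁻¹Rᵀ(R Sₖ⁻¹ Rᵀ)⁻¹(R β̂ₖ − r)` converge in probability
to `β`. -/
theorem rbridge_consistency {p m : ℕ} (hp : 0 < p) (hm : 0 < m) (hmp : m ≤ p)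
    {Ω : Type*} [MeasurableSpace Ω] (μ : Measure Ω) [IsProbabilityMeasure μ]
    (βk : ℕ → Ω → Fin p → ℝ) (hβkmeas : ∀ k i, Measurable fun ω => βk k ω i)
    (β : Fin p → ℝ)
    (hβconv : ∀ δ > (0 : ℝ),
      Tendsto (fun k => μ {ω | δ < Real.sqrt (∑ i, (βk k ω i - β i) ^ 2)}) atTop (𝓝 0))
    (S : ℕ → Matrix (Fin p) (Fin p) ℝ) (hSk : ∀ k, (S k).PosDef)
    (C : Matrix (Fin p) (Fin p) ℝ) (hC : C.PosDef)
    (hSconv : ∀ i j, Tendsto (fun k => S k i j) atTop (𝓝 (C i j)))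
    (R : Matrix (Fin m) (Fin p) ℝ) (hR : R.rank = m)
    (r : Fin m → ℝ) (hβr : R.mulVec β = r) :
    let βkR : ℕ → Ω → Fin p → ℝ := fun k ω =>
      βk k ω - ((S k)⁻¹ * Rᵀ * (R * (S k)⁻¹ * Rᵀ)⁻¹).mulVec (R.mulVec (βk k ω) - r)
    ∀ δ > (0 : ℝ),
      Tendsto (fun k => μ {ω | δ < Real.sqrt (∑ i, (βkR k ω i - β i) ^ 2)}) atTop (𝓝 0) := by
  intro βkR δ hδ
  have hRinj : Function.Injective R.vecMul := by
    rw [Matrix.vecMul_injective_iff, linearIndependent_iff_card_eq_finrank_span,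
      Set.finrank, ← Matrix.rank_eq_finrank_span_row, hR, Fintype.card_fin]
  have hS : Tendsto S atTop (𝓝 C) := by
    exact tendsto_pi_nhds.2 fun i => tendsto_pi_nhds.2 fun j => hSconv i j
  have hunit : ∀ {n : ℕ} {D : Matrix (Fin n) (Fin n) ℝ}, D.PosDef →
      ContinuousAt (fun M : Matrix (Fin n) (Fin n) ℝ => M⁻¹) D := by
    intro n D hD
    apply continuousAt_matrix_inv
    rw [Ring.inverse_eq_inv']
    exact continuousAt_inv₀ hD.det_pos.ne'
  have hSi : Tendsto (fun k => (S k)⁻¹) atTop (𝓝 C⁻¹) := (hunit hC).tendsto.comp hS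
  have hmul : ∀ {a b c : ℕ} {X : ℕ → Matrix (Fin a) (Fin b) ℝ} {Y : ℕ → Matrix (Fin b) (Fin c) ℝ}
      {X₀ : Matrix (Fin a) (Fin b) ℝ} {Y₀ : Matrix (Fin b) (Fin c) ℝ},
      Tendsto X atTop (𝓝 X₀) → Tendsto Y atTop (𝓝 Y₀) →
      Tendsto (fun k => X k * Y k) atTop (𝓝 (X₀ * Y₀)) := by
    intro a b c X Y X₀ Y₀ hX hY
    have hc : Continuous fun q : Matrix (Fin a) (Fin b) ℝ × Matrix (Fin b) (Fin c) ℝ =>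
        q.1 * q.2 := continuous_fst.matrix_mul continuous_snd
    exact (hc.tendsto (X₀, Y₀)).comp (hX.prodMk_nhds hY)
  have hG : (R * C⁻¹ * Rᵀ).PosDef := by
    have := hC.inv.mul_mul_conjTranspose_same (B := R) hRinj
    rwa [Matrix.conjTranspose_eq_transpose_of_trivial] at this
  have hGi : Tendsto (fun k => (R * (S k)⁻¹ * Rᵀ)⁻¹) atTop (𝓝 (R * C⁻¹ * Rᵀ)⁻¹) :=
    (hunit hG).tendsto.comp (hmul (hmul tendsto_const_nhds hSi) tendsto_const_nhds)
  set A : ℕ → Matrix (Fin p) (Fin p) ℝ := fun k =>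
    1 - (S k)⁻¹ * Rᵀ * (R * (S k)⁻¹ * Rᵀ)⁻¹ * R with hAdef
  have hA : Tendsto A atTop (𝓝 (1 - C⁻¹ * Rᵀ * (R * C⁻¹ * Rᵀ)⁻¹ * R)) :=
    tendsto_const_nhds.sub
      (hmul (hmul (hmul hSi tendsto_const_nhds) hGi) tendsto_const_nhds)
  set A₀ := 1 - C⁻¹ * Rᵀ * (R * C⁻¹ * Rᵀ)⁻¹ * R
  have hF : Tendsto (fun k => Real.sqrt (∑ i, ∑ j, A k i j ^ 2)) atTop
      (𝓝 (Real.sqrt (∑ i, ∑ j, A₀ i j ^ 2))) := by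
    have hc : Continuous fun M : Matrix (Fin p) (Fin p) ℝ =>
        Real.sqrt (∑ i, ∑ j, M i j ^ 2) := by
      refine Real.continuous_sqrt.comp (continuous_finsetSum _ fun i _ =>
        continuous_finsetSum _ fun j _ => (continuous_id.matrix_elem i j).pow 2)
    exact (hc.tendsto A₀).comp hA
  set F := Real.sqrt (∑ i, ∑ j, A₀ i j ^ 2)
  have hF0 : 0 ≤ F := Real.sqrt_nonneg _
  have hev : ∀ᶠ k in atTop, Real.sqrt (∑ i, ∑ j, A k i j ^ 2) < F + 1 :=
    hF.eventually (gt_mem_nhds (by linarith))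
  have hkey : ∀ k ω, βkR k ω - β = (A k).mulVec (βk k ω - β) := by
    intro k ω
    simp only [βkR, hAdef, ← hβr]
    rw [← Matrix.mulVec_sub, Matrix.mulVec_mulVec, Matrix.sub_mulVec, Matrix.one_mulVec]
    abel
  refine tendsto_of_tendsto_of_tendsto_of_le_of_le' tendsto_const_nhds
    (hβconv (δ / (F + 1)) (by positivity)) (Eventually.of_forall fun _ => zero_le) ?_
  filter_upwards [hev] with k hk
  apply measure_mono
  intro ω hω
  simp only [Set.mem_ofPred_eq] at hω ⊢
  have h1 := sqrt_mulVec_le (A k) (βk k ω - β)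
  rw [← hkey] at h1
  simp only [Pi.sub_apply] at h1
  rw [div_lt_iff₀ (by positivity), mul_comm]
  exact (hω.trans_le h1).trans_le (mul_le_mul_of_nonneg_right hk.le (Real.sqrt_nonneg _))
end
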